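/- Suppose X and Y are quasiconvex and complete metric spaces, G ⊊ X is a domain, G′ ⊊ Y is a quasiconvex domain, and both f : G → G′ and f⁻¹ : G′ → G are weakly quasisymmetric. Then for every uniform subdomain D ⊂ G, the image D′ = f(D) is uniform, with the uniformity constant of D′ depending only on the quasiconvexity constants of X, Y, G′, the uniformity constant of D, and the weak quasisymmetry constants of f and f⁻¹. -/

import Mathlib

open Metric Set Filter

section QHDefs

variable {X : Type*} [MetricSpace X] {Y : Type*} [MetricSpace Y]

/-- Distance to the boundary of `G`. -/
noncomputable def bdist (G : Set X) (z : X) : ℝ := Metric.infDist z (frontier G)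

/-- A unit-speed (1-Lipschitz, arclength-parametrized) rectifiable curve in `G`
from `x` to `y`, parametrized on `[0, L]`, where `L` is its length. -/
structure CurveIn (G : Set X) (γ : ℝ → X) (L : ℝ) (x y : X) : Prop where
  nonneg : 0 ≤ L
  lip : LipschitzOnWith 1 γ (Set.Icc 0 L)
  source : γ 0 = x
  target : γ L = y
  mem : ∀ t ∈ Set.Icc 0 L, γ t ∈ G

/-- Quasihyperbolic length of the subcurve `γ|[s,t]` in `G`: `∫_γ |dz|/δ_G(z)`. -/
noncomputable def qhLengthOn (G : Set X) (γ : ℝ → X) (s t : ℝ) : ℝ :=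
  ∫ u in s..t, 1 / bdist G (γ u)

/-- Quasihyperbolic length of a curve parametrized on `[0,L]`. -/
noncomputable def qhLength (G : Set X) (γ : ℝ → X) (L : ℝ) : ℝ := qhLengthOn G γ 0 L

/-- Quasihyperbolic distance in `G`. -/
noncomputable def qhDist (G : Set X) (x y : X) : ℝ :=
  sInf {l | ∃ γ L, CurveIn G γ L x y ∧ qhLength G γ L = l}

/-- `X` is a `c`-quasiconvex metric space. -/
def QCSpace (c : ℝ) (X : Type*) [MetricSpace X] : Prop :=
  ∀ x y : X, ∃ γ L, CurveIn (Set.univ : Set X) γ L x y ∧ L ≤ c * dist x y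

/-- A set `G` is `c`-quasiconvex. -/
def QCSet (c : ℝ) (G : Set X) : Prop :=
  ∀ x ∈ G, ∀ y ∈ G, ∃ γ L, CurveIn G γ L x y ∧ L ≤ c * dist x y

/-- A domain: a nonempty connected open set. -/
def IsDomainSet (G : Set X) : Prop := IsOpen G ∧ IsConnected G

/-- A proper domain: a nonempty connected open set, different from the whole space. -/
def IsProperDomain (G : Set X) : Prop := IsOpen G ∧ IsConnected G ∧ G ≠ Set.univ

/-- `G` is an `a`-John domain: each pair of points is joined by a rectifiable arc
satisfying the cone condition. -/
def IsJohn (a : ℝ) (G : Set X) : Prop :=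
  ∀ x ∈ G, ∀ y ∈ G, ∃ γ L, CurveIn G γ L x y ∧
    ∀ t ∈ Set.Icc 0 L, min t (L - t) ≤ a * bdist G (γ t)

/-- `G` is a `b`-uniform domain: each pair of points is joined by a double `b`-cone arc. -/
def IsUniform (b : ℝ) (G : Set X) : Prop :=
  ∀ x ∈ G, ∀ y ∈ G, ∃ γ L, CurveIn G γ L x y ∧ L ≤ b * dist x y ∧
    ∀ t ∈ Set.Icc 0 L, min t (L - t) ≤ b * bdist G (γ t)

/-- `G` is a locally `a`-John domain. -/
def LocallyJohn (a : ℝ) (G : Set X) : Prop :=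
  ∀ x ∈ G, ∀ r : ℝ, 0 < r → r ≤ bdist G x → IsJohn a (Metric.ball x r)

/-- The `h`-coarse quasihyperbolic length of the subcurve `γ|[s,t]` in `G`:
the supremum of sums `Σ k_G(x_{j-1},x_j)` over `h`-coarse sequences of successive
points of the arc (with the convention that it is `0` if there are none). -/
noncomputable def coarseQHLength (G : Set X) (γ : ℝ → X) (s t h : ℝ) : ℝ :=
  sSup {S | ∃ n : ℕ, 0 < n ∧ ∃ u : ℕ → ℝ,
    (∀ i < n, u i ≤ u (i + 1)) ∧ (∀ i ≤ n, u i ∈ Set.Icc s t) ∧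
    (∀ i < n, h ≤ qhDist G (γ (u i)) (γ (u (i + 1)))) ∧
    S = ∑ i ∈ Finset.range n, qhDist G (γ (u i)) (γ (u (i + 1)))}

/-- `γ` (parametrized on `[0,L]`) is a `(ν,h)`-solid arc in `G`. -/
def SolidArc (G : Set X) (γ : ℝ → X) (L ν h : ℝ) : Prop :=
  ∀ s t : ℝ, 0 ≤ s → s ≤ t → t ≤ L →
    coarseQHLength G γ s t h ≤ ν * qhDist G (γ s) (γ t)

/-- `γ` (parametrized on `[0,L]`) is an `ε`-short arc in `G`. -/
def ShortArc (G : Set X) (γ : ℝ → X) (L ε : ℝ) : Prop :=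
  qhLength G γ L ≤ qhDist G (γ 0) (γ L) + ε

/-- A map is weakly `H`-quasisymmetric. -/
def WeakQS (H : ℝ) (f : X → Y) : Prop :=
  ∀ x a b : X, dist x a ≤ dist x b → dist (f x) (f a) ≤ H * dist (f x) (f b)

/-- Image of a subset `D ⊆ G` under a homeomorphism `f : G ≃ₜ G'`, as a subset of `Y`. -/
def imSet {G : Set X} {G' : Set Y} (f : ↥G ≃ₜ ↥G') (D : Set X) : Set Y :=
  Subtype.val '' (f '' (Subtype.val ⁻¹' D))

/-- `f : G ≃ₜ G'` is `M`-quasihyperbolic. -/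
def MQH (M : ℝ) {G : Set X} {G' : Set Y} (f : ↥G ≃ₜ ↥G') : Prop :=
  ∀ x y : ↥G, (1 / M) * qhDist G ↑x ↑y ≤ qhDist G' ↑(f x) ↑(f y) ∧
    qhDist G' ↑(f x) ↑(f y) ≤ M * qhDist G ↑x ↑y

/-- `f : G ≃ₜ G'` is `C`-coarsely `M`-quasihyperbolic. -/
def CQH (M C : ℝ) {G : Set X} {G' : Set Y} (f : ↥G ≃ₜ ↥G') : Prop :=
  ∀ x y : ↥G, (qhDist G ↑x ↑y - C) / M ≤ qhDist G' ↑(f x) ↑(f y) ∧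
    qhDist G' ↑(f x) ↑(f y) ≤ M * qhDist G ↑x ↑y + C

/-- `f : G ≃ₜ G'` is freely `φ`-quasiconformal: in every subdomain, the
quasihyperbolic distances of `f` and `f⁻¹` are controlled by `φ`. -/
def FQC (φ : ℝ → ℝ) {G : Set X} {G' : Set Y} (f : ↥G ≃ₜ ↥G') : Prop :=
  ∀ D : Set X, ∀ hD : D ⊆ G, IsDomainSet D →
    ∀ x : X, ∀ hx : x ∈ D, ∀ y : X, ∀ hy : y ∈ D,
      qhDist (imSet f D) ↑(f ⟨x, hD hx⟩) ↑(f ⟨y, hD hy⟩) ≤ φ (qhDist D x y) ∧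
      qhDist D x y ≤ φ (qhDist (imSet f D) ↑(f ⟨x, hD hx⟩) ↑(f ⟨y, hD hy⟩))

end QHDefs

/-! On a `b`-uniform set `D` the map is quasisymmetric, with control at all scales in both
directions: walking along quasiconvex curves turns weak quasisymmetry into a bound at every scale,
and the same bound for the inverse says that small distance ratios go to small ones. Since `X` is
complete and quasiconvex, distances relative to the distance to the frontier are distorted in a
controlled way.

A double cone arc is cut at its midpoint into two carrots, and each carrot is cut at geometrically
decreasing scales towards its vertex. A piece is deep relative to its length, hence a bounded
number of points on it have images that are successively joined by short curves deep in the image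
of `D`; their total length is comparable to the diameter of the image of the carrot up to that
scale. Passing to the next smaller scale at least halves this diameter, so the lengths are
dominated by a geometric series and the concatenated curve is again a carrot. Two image carrots
with a common end form the double cone arc sought. -/

section Curves

variable {X : Type*} {γ γ₁ γ₂ : ℝ → X} {L L₁ L₂ t : ℝ}

/-- The concatenation of `γ₁`, followed up to time `L₁`, with `γ₂`. -/
noncomputable def curveConcat (γ₁ γ₂ : ℝ → X) (L₁ t : ℝ) : X :=
  if t ≤ L₁ then γ₁ t else γ₂ (t - L₁)

lemma curveConcat_of_le (ht : t ≤ L₁) : curveConcat γ₁ γ₂ L₁ t = γ₁ t := if_pos ht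

lemma curveConcat_of_ge (hglue : γ₁ L₁ = γ₂ 0) (ht : L₁ ≤ t) :
    curveConcat γ₁ γ₂ L₁ t = γ₂ (t - L₁) := by
  rcases ht.eq_or_lt with rfl | ht
  · rw [curveConcat_of_le le_rfl, sub_self, hglue]
  · exact if_neg ht.not_ge

lemma forall_curveConcat {p : ℝ → X → Prop} (hglue : γ₁ L₁ = γ₂ 0)
    (h₁ : ∀ t ∈ Icc 0 L₁, p t (γ₁ t)) (h₂ : ∀ t ∈ Icc 0 L₂, p (L₁ + t) (γ₂ t)) :
    ∀ t ∈ Icc 0 (L₁ + L₂), p t (curveConcat γ₁ γ₂ L₁ t) := by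
  intro t ht
  rcases le_total t L₁ with htL | htL
  · rw [curveConcat_of_le htL]
    exact h₁ t ⟨ht.1, htL⟩
  · rw [curveConcat_of_ge hglue htL]
    simpa using h₂ (t - L₁) ⟨sub_nonneg.2 htL, by linarith [ht.2]⟩

variable [MetricSpace X] {G D : Set X} {x y z : X}

namespace CurveIn

lemma dist_le (h : CurveIn G γ L x y) {s : ℝ} (hs : s ∈ Icc 0 L) (ht : t ∈ Icc 0 L) :
    dist (γ s) (γ t) ≤ |s - t| := by
  simpa [Real.dist_eq] using h.lip.dist_le_mul s hs t ht

lemma dist_source_le (h : CurveIn G γ L x y) (ht : t ∈ Icc 0 L) : dist x (γ t) ≤ t := by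
  simpa [h.source, abs_of_nonneg ht.1] using h.dist_le (left_mem_Icc.2 h.nonneg) ht

lemma source_mem (h : CurveIn G γ L x y) : x ∈ G :=
  h.source ▸ h.mem 0 (left_mem_Icc.2 h.nonneg)

lemma target_mem (h : CurveIn G γ L x y) : y ∈ G :=
  h.target ▸ h.mem L (right_mem_Icc.2 h.nonneg)

lemma refl (hx : x ∈ G) : CurveIn G (fun _ => x) 0 x x :=
  ⟨le_rfl, (LipschitzWith.const' x).lipschitzOnWith, rfl, rfl, fun _ _ => hx⟩

lemma comp (h : CurveIn G γ L x y) {φ : ℝ → ℝ} {L' : ℝ} (hL' : 0 ≤ L')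
    (hφ : LipschitzOnWith 1 φ (Icc 0 L')) (hmaps : MapsTo φ (Icc 0 L') (Icc 0 L)) :
    CurveIn G (γ ∘ φ) L' (γ (φ 0)) (γ (φ L')) :=
  ⟨hL', by simpa using h.lip.comp hφ hmaps, rfl, rfl, fun _ ht => h.mem _ (hmaps ht)⟩

lemma reverse (h : CurveIn G γ L x y) : CurveIn G (fun t => γ (L - t)) L y x := by
  have hφ : LipschitzOnWith 1 (fun t => L - t) (Icc 0 L) :=
    .mk_one fun s _ t _ => (dist_sub_left L s t).le
  have := h.comp h.nonneg hφ fun t ht => ⟨by linarith [ht.2], by linarith [ht.1]⟩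
  rwa [sub_zero, sub_self, h.source, h.target] at this

lemma truncate (h : CurveIn G γ L x y) (ht : t ∈ Icc 0 L) : CurveIn G γ t x (γ t) :=
  ⟨ht.1, h.lip.mono (Icc_subset_Icc_right ht.2), h.source, rfl,
    fun u hu => h.mem u ⟨hu.1, hu.2.trans ht.2⟩⟩

lemma drop (h : CurveIn G γ L x y) (ht : t ∈ Icc 0 L) :
    CurveIn G (fun u => γ (t + u)) (L - t) (γ t) y := by
  have hφ : LipschitzOnWith 1 (fun u => t + u) (Icc 0 (L - t)) :=
    .mk_one fun u _ v _ => (dist_add_left t u v).le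
  have := h.comp (sub_nonneg.2 ht.2) hφ
    fun u hu => ⟨by linarith [ht.1, hu.1], by linarith [hu.2]⟩
  rwa [add_zero, add_sub_cancel, h.target] at this

end CurveIn

lemma lipschitzOnWith_Icc_of_Icc_of_Icc {E : Type*} [PseudoMetricSpace E] {K : NNReal} {f : ℝ → E}
    {a b c : ℝ} (hab : LipschitzOnWith K f (Icc a b)) (hbc : LipschitzOnWith K f (Icc b c)) :
    LipschitzOnWith K f (Icc a c) := by
  have ordered : ∀ s ∈ Icc a c, ∀ t ∈ Icc a c, s ≤ t → dist (f s) (f t) ≤ K * dist s t := by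
    intro s hs t ht hst
    rcases le_total t b with htb | hbt
    · exact hab.dist_le_mul s ⟨hs.1, hst.trans htb⟩ t ⟨ht.1, htb⟩
    rcases le_total b s with hbs | hsb
    · exact hbc.dist_le_mul s ⟨hbs, hs.2⟩ t ⟨hbt, ht.2⟩
    calc dist (f s) (f t) ≤ dist (f s) (f b) + dist (f b) (f t) := dist_triangle _ _ _
      _ ≤ K * dist s b + K * dist b t := add_le_add
          (hab.dist_le_mul s ⟨hs.1, hsb⟩ b ⟨hs.1.trans hsb, le_rfl⟩)
          (hbc.dist_le_mul b ⟨le_rfl, hbt.trans ht.2⟩ t ⟨hbt, ht.2⟩)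
      _ = K * dist s t := by
          rw [← mul_add, dist_add_dist_of_mem_segment (by
            rw [segment_eq_Icc hst]; exact ⟨hsb, hbt⟩)]
  refine .of_dist_le_mul fun s hs t ht => ?_
  rcases le_total s t with hst | hts
  · exact ordered s hs t ht hst
  · simpa only [dist_comm] using ordered t ht s hs hts

lemma CurveIn.concat (h₁ : CurveIn G γ₁ L₁ x y) (h₂ : CurveIn G γ₂ L₂ y z) :
    CurveIn G (curveConcat γ₁ γ₂ L₁) (L₁ + L₂) x z := by
  have hglue : γ₁ L₁ = γ₂ 0 := h₁.target.trans h₂.source.symm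
  refine ⟨add_nonneg h₁.nonneg h₂.nonneg, ?_, ?_, ?_,
    forall_curveConcat hglue h₁.mem h₂.mem⟩
  · refine lipschitzOnWith_Icc_of_Icc_of_Icc (b := L₁) (fun s hs t ht => ?_) fun s hs t ht => ?_
    · rw [curveConcat_of_le hs.2, curveConcat_of_le ht.2]
      exact h₁.lip hs ht
    · rw [curveConcat_of_ge hglue hs.1, curveConcat_of_ge hglue ht.1,
        ← edist_sub_right s t L₁]
      exact h₂.lip ⟨sub_nonneg.2 hs.1, by linarith [hs.2]⟩ ⟨sub_nonneg.2 ht.1, by linarith [ht.2]⟩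
  · rw [curveConcat_of_le h₁.nonneg, h₁.source]
  · rw [curveConcat_of_ge hglue (le_add_of_nonneg_right h₂.nonneg), add_sub_cancel_left, h₂.target]

lemma CurveIn.exists_mem_frontier (h : CurveIn G γ L x y) (hx : x ∈ D) (ht : t ∈ Icc 0 L)
    (htD : γ t ∉ D) : ∃ u ∈ Icc 0 L, γ u ∈ frontier D := by
  have hcont : Continuous ((Icc 0 L).domRestrict γ) := h.lip.continuousOn.domRestrict
  have : PreconnectedSpace (Icc 0 L) := isPreconnected_iff_preconnectedSpace.1 isPreconnected_Icc
  obtain ⟨u, hu⟩ : (frontier ((Icc 0 L).domRestrict γ ⁻¹' D)).Nonempty := by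
    refine nonempty_frontier_iff.2 ⟨⟨⟨0, left_mem_Icc.2 h.nonneg⟩, ?_⟩, fun huniv => htD ?_⟩
    · simpa [h.source] using hx
    · exact huniv.ge (mem_univ (⟨t, ht⟩ : Icc 0 L))
  exact ⟨u, u.2, hcont.frontier_preimage_subset D hu⟩

lemma bdist_nonneg (D : Set X) (z : X) : 0 ≤ bdist D z := infDist_nonneg

lemma bdist_le_add_dist (D : Set X) (z w : X) : bdist D z ≤ bdist D w + dist z w :=
  infDist_le_infDist_add_dist

lemma bdist_pos (hD : IsOpen D) (hfr : (frontier D).Nonempty) (hx : x ∈ D) : 0 < bdist D x :=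
  (isClosed_frontier.notMem_iff_infDist_pos hfr).1 fun h => (hD.inter_frontier_eq.le ⟨hx, h⟩).elim

lemma CurveIn.mem_of_two_mul_le_bdist (h : CurveIn G γ L x y) (hx : x ∈ D)
    (hL : 2 * L ≤ bdist D x) (ht : t ∈ Icc 0 L) : γ t ∈ D := by
  by_contra htD
  obtain ⟨u, hu, hufr⟩ := h.exists_mem_frontier hx ht htD
  have hδ : bdist D x ≤ L := (infDist_le_dist_of_mem hufr).trans ((h.dist_source_le hu).trans hu.2)
  obtain rfl : t = 0 := by linarith [ht.1, ht.2]
  exact htD (h.source ▸ hx)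

namespace QCSpace

variable {c : ℝ}

lemma frontier_nonempty (hX : QCSpace c X) (hD : D.Nonempty) (hD' : D ≠ univ) :
    (frontier D).Nonempty := by
  obtain ⟨x, hx⟩ := hD
  obtain ⟨y, hy⟩ := (ne_univ_iff_exists_notMem D).1 hD'
  obtain ⟨γ, L, hγ, -⟩ := hX x y
  obtain ⟨u, -, hu⟩ := hγ.exists_mem_frontier hx (right_mem_Icc.2 hγ.nonneg) (by rwa [hγ.target])
  exact ⟨_, hu⟩

lemma closedBall_subset (hX : QCSpace c X) (hc : 0 ≤ c) (hx : x ∈ D) {r : ℝ}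
    (hr : 2 * (c * r) ≤ bdist D x) : closedBall x r ⊆ D := by
  intro y hy
  obtain ⟨γ, L, hγ, hL⟩ := hX x y
  have hLr : L ≤ c * r := hL.trans (mul_le_mul_of_nonneg_left (mem_closedBall'.1 hy) hc)
  simpa only [hγ.target] using
    hγ.mem_of_two_mul_le_bdist hx (by linarith) (right_mem_Icc.2 hγ.nonneg)

lemma exists_curve_of_two_mul_le_bdist (hX : QCSpace c X) (hx : x ∈ D)
    (hxy : 2 * (c * dist x y) ≤ bdist D x) :
    ∃ γ L, CurveIn D γ L x y ∧ L ≤ c * dist x y ∧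
      ∀ t ∈ Icc 0 L, bdist D x ≤ 2 * bdist D (γ t) := by
  obtain ⟨γ, L, hγ, hL⟩ := hX x y
  have hmem : ∀ t ∈ Icc 0 L, γ t ∈ D := fun t => hγ.mem_of_two_mul_le_bdist hx (by linarith)
  refine ⟨γ, L, ⟨hγ.nonneg, hγ.lip, hγ.source, hγ.target, hmem⟩, hL, fun t ht => ?_⟩
  linarith [bdist_le_add_dist D x (γ t), hγ.dist_source_le ht, ht.2]

lemma exists_curve_of_chain (hX : QCSpace c X) {ρ m : ℝ} {q : ℕ → X} (h0 : q 0 ∈ D) (n : ℕ)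
    (hstep : ∀ k < n, c * dist (q k) (q (k + 1)) ≤ ρ)
    (hsmall : ∀ k < n, 2 * (c * dist (q k) (q (k + 1))) ≤ bdist D (q k))
    (hdeep : ∀ k ≤ n, m ≤ bdist D (q k)) :
    ∃ γ L, CurveIn D γ L (q 0) (q n) ∧ L ≤ n * ρ ∧ ∀ t ∈ Icc 0 L, m ≤ 2 * bdist D (γ t) := by
  induction n with
  | zero =>
    exact ⟨_, 0, .refl h0, by simp, fun t _ => by linarith [hdeep 0 le_rfl, bdist_nonneg D (q 0)]⟩
  | succ n ih =>
    obtain ⟨γ₁, L₁, h₁, hL₁, hdeep₁⟩ := ih (fun k hk => hstep k (by lia))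
      (fun k hk => hsmall k (by lia)) fun k hk => hdeep k (by lia)
    obtain ⟨γ₂, L₂, h₂, hL₂, hdeep₂⟩ :=
      hX.exists_curve_of_two_mul_le_bdist h₁.target_mem (hsmall n n.lt_succ_self)
    refine ⟨_, _, h₁.concat h₂, ?_, forall_curveConcat (p := fun _ w => m ≤ 2 * bdist D w)
      (h₁.target.trans h₂.source.symm) hdeep₁
      fun t ht => (hdeep n n.le_succ).trans (hdeep₂ t ht)⟩
    push_cast
    linarith [hstep n n.lt_succ_self]

end QCSpace

end Curves

section Carrots

variable {X : Type*} [MetricSpace X] {G : Set X} {γ γ₁ γ₂ : ℝ → X} {a b L L₁ L₂ t : ℝ}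
  {x y z : X}

/-- An `a`-carrot in `G` with vertex `x`: a curve satisfying the cone condition measured from its
initial point only. A double cone arc consists of two carrots with a common end. -/
structure CarrotIn (a : ℝ) (G : Set X) (γ : ℝ → X) (L : ℝ) (x y : X) : Prop
    extends CurveIn G γ L x y where
  cone : ∀ t ∈ Icc 0 L, t ≤ a * bdist G (γ t)

namespace CarrotIn

lemma refl (ha : 0 ≤ a) (hx : x ∈ G) : CarrotIn a G (fun _ => x) 0 x x :=
  ⟨.refl hx, fun _ ht => ht.2.trans (mul_nonneg ha (bdist_nonneg _ _))⟩

lemma truncate (h : CarrotIn a G γ L x y) (ht : t ∈ Icc 0 L) : CarrotIn a G γ t x (γ t) :=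
  ⟨h.toCurveIn.truncate ht, fun u hu => h.cone u ⟨hu.1, hu.2.trans ht.2⟩⟩

lemma concat (h₁ : CarrotIn a G γ₁ L₁ x y) (h₂ : CurveIn G γ₂ L₂ y z)
    (hdeep : ∀ t ∈ Icc 0 L₂, L₁ + L₂ ≤ a * bdist G (γ₂ t)) :
    CarrotIn a G (curveConcat γ₁ γ₂ L₁) (L₁ + L₂) x z :=
  ⟨h₁.toCurveIn.concat h₂, forall_curveConcat (p := fun t w => t ≤ a * bdist G w)
    (h₁.target.trans h₂.source.symm) h₁.cone
    fun t ht => (add_le_add_right ht.2 L₁).trans (hdeep t ht)⟩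

lemma bdist_source_le (h : CarrotIn a G γ L x y) (ht : t ∈ Icc 0 L) :
    bdist G x ≤ (1 + a) * bdist G (γ t) := by
  linarith [bdist_le_add_dist G x (γ t), h.dist_source_le ht, h.cone t ht]

lemma length_le_dist (h : CarrotIn a G γ L x y) (ha : 0 ≤ a) (hL : 2 * a * bdist G x ≤ L) :
    L ≤ 2 * a * dist x y := by
  have hcone : L ≤ a * bdist G y := h.target ▸ h.cone L (right_mem_Icc.2 h.nonneg)
  have htri : a * bdist G y ≤ a * (bdist G x + dist x y) :=
    mul_le_mul_of_nonneg_left (dist_comm y x ▸ bdist_le_add_dist G y x) ha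
  linarith

end CarrotIn

lemma IsUniform.mono (h : IsUniform a G) (hab : a ≤ b) : IsUniform b G := by
  intro x hx y hy
  obtain ⟨γ, L, hγ, hL, hcone⟩ := h x hx y hy
  exact ⟨γ, L, hγ, hL.trans (mul_le_mul_of_nonneg_right hab dist_nonneg), fun t ht =>
    (hcone t ht).trans (mul_le_mul_of_nonneg_right hab (bdist_nonneg _ _))⟩

lemma IsUniform.qcSet (h : IsUniform b G) : QCSet b G := fun x hx y hy =>
  let ⟨γ, L, hγ, hL, _⟩ := h x hx y hy
  ⟨γ, L, hγ, hL⟩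

lemma isUniform_iff_exists_carrotIn :
    IsUniform b G ↔ ∀ x ∈ G, ∀ y ∈ G, ∃ z γ₁ L₁ γ₂ L₂,
      CarrotIn b G γ₁ L₁ x z ∧ CarrotIn b G γ₂ L₂ y z ∧ L₁ + L₂ ≤ b * dist x y := by
  constructor
  · intro h x hx y hy
    obtain ⟨γ, L, hγ, hL, hcone⟩ := h x hx y hy
    have hmid : L / 2 ∈ Icc 0 L := ⟨by linarith [hγ.nonneg], by linarith [hγ.nonneg]⟩
    have hrev := hγ.reverse.truncate hmid
    simp only [sub_half] at hrev
    refine ⟨γ (L / 2), γ, L / 2, _, L / 2, ⟨hγ.truncate hmid, fun t ht => ?_⟩,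
      ⟨hrev, fun t ht => ?_⟩, by rwa [add_halves]⟩
    · simpa [min_eq_left (show t ≤ L - t by linarith [ht.2])] using
        hcone t ⟨ht.1, ht.2.trans hmid.2⟩
    · simpa [min_eq_right (show t ≤ L - t by linarith [ht.2])] using
        hcone (L - t) ⟨by linarith [ht.2, hmid.2], by linarith [ht.1]⟩
  · intro h x hx y hy
    obtain ⟨z, γ₁, L₁, γ₂, L₂, h₁, h₂, hL⟩ := h x hx y hy
    have h₂' := h₂.toCurveIn.reverse
    refine ⟨_, _, h₁.toCurveIn.concat h₂', hL, ?_⟩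
    refine forall_curveConcat (p := fun t w => min t (L₁ + L₂ - t) ≤ b * bdist G w)
      (h₁.target.trans h₂'.source.symm) (fun t ht => (min_le_left _ _).trans (h₁.cone t ht))
      fun t ht => (min_le_right _ _).trans ?_
    simpa [add_sub_add_left_eq_sub] using
      h₂.cone (L₂ - t) ⟨sub_nonneg.2 ht.2, by linarith [ht.1]⟩

end Carrots

section Quasisymmetry

variable {X Y : Type*} [MetricSpace X] [MetricSpace Y] {F : X → Y} {D E : Set X} {s M : ℝ}

/-- `F` is weakly `(s, M)`-quasisymmetric on `D`: it maps distance ratios at most `s` to distance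
ratios at most `M`. Weak `H`-quasisymmetry is the case `s = 1`, `M = H`. -/
def WeakQSOn (s M : ℝ) (F : X → Y) (D : Set X) : Prop :=
  ∀ x ∈ D, ∀ a ∈ D, ∀ w ∈ D, dist x a ≤ s * dist x w → dist (F x) (F a) ≤ M * dist (F x) (F w)

/-- `F` is quasisymmetric on `D` with gauge `(M, σ)`. This is `η`-quasisymmetry with the
homeomorphism `η` replaced by `η ≤ M` and by the small-scale condition `η (σ ε) ≤ ε`. -/
structure QuasisymmetricOn (M σ : ℝ → ℝ) (F : X → Y) (D : Set X) : Prop where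
  weakQSOn : ∀ s, WeakQSOn s (M s) F D
  weakQSOn_small : ∀ ε, 0 < ε → WeakQSOn (σ ε) ε F D

/-- `F` is relative on `D` at scale `(s, Φ)`: distances relative to the distance to the frontier
are controlled, ratios at most `s` in `D` being mapped to ratios at most `Φ` in `F '' D`. -/
def RelativeOn (s Φ : ℝ) (F : X → Y) (D : Set X) : Prop :=
  ∀ p ∈ D, ∀ q ∈ D, dist p q ≤ s * bdist D p → dist (F p) (F q) ≤ Φ * bdist (F '' D) (F p)

lemma WeakQS.weakQSOn {H : ℝ} {G : Set X} {G' : Set Y} {f : G → G'} (hf : WeakQS H f)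
    (hF : ∀ x : G, F x = f x) : WeakQSOn 1 H F G := by
  intro x hx a ha w hw h
  rw [one_mul] at h
  rw [hF ⟨x, hx⟩, hF ⟨a, ha⟩, hF ⟨w, hw⟩]
  exact hf ⟨x, hx⟩ ⟨a, ha⟩ ⟨w, hw⟩ h

lemma WeakQSOn.mono_set (h : WeakQSOn s M F D) (hED : E ⊆ D) : WeakQSOn s M F E :=
  fun x hx a ha w hw => h x (hED hx) a (hED ha) w (hED hw)

lemma WeakQSOn.mono_scale {s' : ℝ} (h : WeakQSOn s M F D) (hs : s' ≤ s) : WeakQSOn s' M F D :=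
  fun x hx a ha w hw hxa =>
    h x hx a ha w hw (hxa.trans (mul_le_mul_of_nonneg_right hs dist_nonneg))

/-- Each step moves from `x` to a point of the curve at distance `dist x w`, which shortens the rest
of the curve by at least that much and multiplies the bound on image distances by `2 * H`. -/
lemma CurveIn.dist_image_le {H : ℝ} (hH : 1 ≤ H) (hF : WeakQSOn 1 H F D) (n : ℕ) {γ : ℝ → X}
    {L : ℝ} {x a w : X} (hγ : CurveIn D γ L x a) (hw : w ∈ D) (hL : L ≤ n * dist x w) :
    dist (F x) (F a) ≤ H * (2 * H) ^ n * dist (F x) (F w) := by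
  have hxa : dist x a ≤ L := by
    simpa only [hγ.target] using hγ.dist_source_le (right_mem_Icc.2 hγ.nonneg)
  induction n generalizing γ L x w with
  | zero =>
    obtain rfl : x = a := dist_le_zero.1 (by simpa using hxa.trans hL)
    rw [dist_self]
    positivity
  | succ n ih =>
    have hpow : 1 ≤ (2 * H) ^ n := one_le_pow₀ (by linarith)
    obtain hnear | hfar := le_total (dist x a) (dist x w)
    · calc dist (F x) (F a) ≤ H * dist (F x) (F w) :=
            hF x hγ.source_mem a hγ.target_mem w hw (by rwa [one_mul])
        _ ≤ H * (2 * H) ^ (n + 1) * dist (F x) (F w) := by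
            gcongr
            exact le_mul_of_one_le_right (by linarith) (one_le_pow₀ (by linarith))
    obtain ⟨u, hu, hur⟩ : ∃ u ∈ Icc 0 L, dist x (γ u) = dist x w :=
      intermediate_value_Icc hγ.nonneg
        ((continuous_const.dist continuous_id).comp_continuousOn hγ.lip.continuousOn)
        ⟨by simp [hγ.source], by simpa [hγ.target] using hfar⟩
    have hru : dist x w ≤ u := hur ▸ hγ.dist_source_le hu
    have hrest : dist (F (γ u)) (F a) ≤ H * (2 * H) ^ n * dist (F (γ u)) (F x) := by
      refine ih (hγ.drop hu) hγ.source_mem ?_ ?_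
      · rw [dist_comm, hur]
        push_cast at hL
        linarith
      · simpa only [hγ.target, abs_sub_comm u L, abs_of_nonneg (sub_nonneg.2 hu.2)] using
          hγ.dist_le hu (right_mem_Icc.2 hγ.nonneg)
    have hfirst : dist (F x) (F (γ u)) ≤ H * dist (F x) (F w) :=
      hF x hγ.source_mem _ (hγ.mem u hu) w hw (by rw [one_mul, hur])
    have hK : 1 ≤ H * (2 * H) ^ n := one_le_mul_of_one_le_of_one_le hH hpow
    calc dist (F x) (F a) ≤ dist (F x) (F (γ u)) + dist (F (γ u)) (F a) := dist_triangle _ _ _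
      _ ≤ (1 + H * (2 * H) ^ n) * dist (F x) (F (γ u)) := by
          rw [dist_comm (F (γ u)) (F x)] at hrest
          linarith
      _ ≤ (2 * (H * (2 * H) ^ n)) * (H * dist (F x) (F w)) := by
          gcongr
          linarith
      _ = H * (2 * H) ^ (n + 1) * dist (F x) (F w) := by ring

lemma QCSet.weakQSOn {c H : ℝ} (hD : QCSet c D) (hc : 0 ≤ c) (hH : 1 ≤ H)
    (hF : WeakQSOn 1 H F D) (s : ℝ) : WeakQSOn s (H * (2 * H) ^ ⌈c * s⌉₊) F D := by
  intro x hx a ha w hw hxa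
  obtain ⟨γ, L, hγ, hL⟩ := hD x hx a ha
  refine hγ.dist_image_le hH hF _ hw ?_
  calc L ≤ c * (s * dist x w) := hL.trans (mul_le_mul_of_nonneg_left hxa hc)
    _ = c * s * dist x w := by ring
    _ ≤ ⌈c * s⌉₊ * dist x w := by gcongr; exact Nat.le_ceil _

lemma WeakQSOn.of_leftInvOn {Fi : Y → X} {D' : Set Y} {ε : ℝ} (h : WeakQSOn ε⁻¹ M Fi D')
    (hmaps : MapsTo F D D') (hinv : LeftInvOn Fi F D) (hε : 0 < ε) (hM : 0 ≤ M) (hs : M * s < 1) :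
    WeakQSOn s ε F D := by
  intro x hx a ha w hw hxa
  by_contra! hcon
  have hxw : dist x w ≤ M * dist x a := by
    have := h (F x) (hmaps hx) (F w) (hmaps hw) (F a) (hmaps ha)
      (by rw [le_inv_mul_iff₀ hε]; exact hcon.le)
    rwa [hinv hx, hinv hw, hinv ha] at this
  have hxw0 : dist x w = 0 := by
    nlinarith [mul_le_mul_of_nonneg_left hxa hM, dist_nonneg (x := x) (y := w)]
  obtain rfl : x = a := dist_le_zero.1 (by simpa [hxw0] using hxa)
  rw [dist_self] at hcon
  exact hcon.not_ge (by positivity)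

lemma quasisymmetricOn_of_weakQSOn {Fi : Y → X} {D' : Set Y} {b c H : ℝ} (hb : 0 ≤ b)
    (hc : 0 ≤ c) (hH : 1 ≤ H) (hD : QCSet b D) (hD' : QCSet c D') (hmaps : MapsTo F D D')
    (hinv : LeftInvOn Fi F D) (hF : WeakQSOn 1 H F D) (hFi : WeakQSOn 1 H Fi D') :
    QuasisymmetricOn (fun s => H * (2 * H) ^ ⌈b * s⌉₊)
      (fun ε => (2 * (H * (2 * H) ^ ⌈c * ε⁻¹⌉₊))⁻¹) F D where
  weakQSOn := hD.weakQSOn hb hH hF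
  weakQSOn_small ε hε := by
    refine (hD'.weakQSOn hc hH hFi ε⁻¹).of_leftInvOn hmaps hinv hε (by positivity) ?_
    have : 0 < H * (2 * H) ^ ⌈c * ε⁻¹⌉₊ := by positivity
    rw [mul_inv_lt_iff₀ (by positivity)]
    linarith

lemma cauchySeq_of_cauchySeq_image (hF : ∀ s, ∃ M, WeakQSOn s M F D)
    (hD : Bornology.IsBounded D) {w : ℕ → X} (hw : ∀ n, w n ∈ D)
    (hcauchy : CauchySeq fun n => F (w n)) {p : X} (hp : p ∈ D) {d : ℝ} (hd : 0 < d)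
    (hfar : ∀ᶠ n in atTop, d ≤ dist (F (w n)) (F p)) : CauchySeq w := by
  obtain ⟨R, hR⟩ := Metric.isBounded_iff.1 hD
  rw [Metric.cauchySeq_iff]
  intro ε hε
  obtain ⟨M, hM⟩ := hF (R / ε)
  obtain ⟨N₁, hN₁⟩ := Metric.cauchySeq_iff.1 hcauchy (d / (|M| + 1)) (by positivity)
  obtain ⟨N₂, hN₂⟩ := eventually_atTop.1 hfar
  refine ⟨max N₁ N₂, fun m hm n hn => ?_⟩
  by_contra! hεmn
  have hratio : dist (w m) p ≤ R / ε * dist (w m) (w n) := by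
    have hmp := hR (hw m) hp
    rw [div_mul_eq_mul_div, le_div_iff₀ hε]
    nlinarith [dist_nonneg (x := w m) (y := p)]
  have hclose := hN₁ m (le_of_max_le_left hm) n (le_of_max_le_left hn)
  rw [lt_div_iff₀ (by positivity)] at hclose
  have hMd : d ≤ M * dist (F (w m)) (F (w n)) :=
    (hN₂ m (le_of_max_le_right hm)).trans (hM _ (hw m) p hp _ (hw n) hratio)
  nlinarith [le_abs_self M, dist_nonneg (x := F (w m)) (y := F (w n))]

lemma isClosed_image_of_weakQSOn (hF : ∀ s, ∃ M, WeakQSOn s M F D) (hcont : ContinuousOn F D)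
    (hcomplete : IsComplete D) (hbdd : Bornology.IsBounded D) : IsClosed (F '' D) := by
  refine isSeqClosed_iff_isClosed.1 fun u y hu huy => ?_
  choose w hwD hwu using hu
  obtain rfl : u = fun n => F (w n) := funext fun n => (hwu n).symm
  by_contra hy
  have hp : w 0 ∈ D := hwD 0
  have hpy : 0 < dist y (F (w 0)) := dist_pos.2 fun h => hy (h ▸ mem_image_of_mem F hp)
  have hfar : ∀ᶠ n in atTop, dist y (F (w 0)) / 2 ≤ dist (F (w n)) (F (w 0)) :=
    (huy.dist tendsto_const_nhds).eventually (le_mem_nhds (half_lt_self hpy))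
  obtain ⟨z, hzD, hz⟩ := cauchySeq_tendsto_of_isComplete hcomplete hwD
    (cauchySeq_of_cauchySeq_image hF hbdd hwD huy.cauchySeq hp (half_pos hpy) hfar)
  have hFz : Tendsto (fun n => F (w n)) atTop (nhds (F z)) :=
    (hcont z hzD).tendsto.comp (tendsto_nhdsWithin_iff.2 ⟨hz, .of_forall hwD⟩)
  exact hy (tendsto_nhds_unique huy hFz ▸ mem_image_of_mem F hzD)

/-- Completeness of `X` makes the image of a closed ball in `D` closed, so that a frontier point
of `F '' D` is a limit of images of points outside that ball. -/
theorem WeakQSOn.relativeOn [CompleteSpace X] {c Φ : ℝ} (h : WeakQSOn (2 * c * s) Φ F D)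
    (hc : 0 < c) (hs : 0 ≤ s) (hΦ : 0 < Φ) (hX : QCSpace c X) (hF : ∀ s, ∃ M, WeakQSOn s M F D)
    (hcont : ContinuousOn F D) (hD' : IsOpen (F '' D)) (hfr : (frontier (F '' D)).Nonempty) :
    RelativeOn s Φ F D := by
  intro p hp q hq hpq
  set r := bdist D p / (2 * c) with hr
  have hball : closedBall p r ⊆ D :=
    hX.closedBall_subset hc.le hp (by rw [hr, ← mul_assoc, mul_div_cancel₀ _ (by positivity)])
  have hclosed : IsClosed (F '' closedBall p r) :=
    isClosed_image_of_weakQSOn (fun s => (hF s).imp fun _ h => h.mono_set hball)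
      (hcont.mono hball) isClosed_closedBall.isComplete isBounded_closedBall
  have hfar : closure (F '' (D \ closedBall p r)) ⊆
      {z | dist (F p) (F q) ≤ Φ * dist (F p) z} := by
    refine closure_minimal ?_ (isClosed_le (by fun_prop) (by fun_prop))
    rintro _ ⟨w, ⟨hwD, hw⟩, rfl⟩
    refine h p hp q hq w hwD (hpq.trans ?_)
    rw [mem_closedBall', not_le, hr, div_lt_iff₀ (by positivity)] at hw
    calc s * bdist D p ≤ s * (dist p w * (2 * c)) := by gcongr
      _ = 2 * c * s * dist p w := by ring
  rw [← div_le_iff₀' hΦ]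
  refine (le_infDist hfr).2 fun z hz => ?_
  have hzD : z ∉ F '' D := fun h => (hD'.inter_frontier_eq.le ⟨h, hz⟩).elim
  have hz' := frontier_subset_closure hz
  rw [← union_sdiff_cancel hball, image_union, closure_union, hclosed.closure_eq] at hz'
  rw [div_le_iff₀' hΦ]
  exact hfar (hz'.resolve_left fun hzball => hzD (image_mono hball hzball))

end Quasisymmetry

section UniformImage

lemma diam_image_le_two_mul {ι Y : Type*} [PseudoMetricSpace Y] {f : ι → Y} {S : Set ι} {p : Y}
    {B : ℝ} (hB : 0 ≤ B) (h : ∀ u ∈ S, dist p (f u) ≤ B) : diam (f '' S) ≤ 2 * B :=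
  diam_le_of_subset_closedBall hB (image_subset_iff.2 fun u hu => mem_closedBall'.2 (h u hu))

lemma exists_equipartition {s t : ℝ} (hst : s ≤ t) {N : ℕ} (hN : N ≠ 0) :
    ∃ τ : ℕ → ℝ, τ 0 = s ∧ τ N = t ∧ (∀ k ≤ N, τ k ∈ Icc s t) ∧
      ∀ k, |τ k - τ (k + 1)| = (t - s) / N := by
  have hh : 0 ≤ (t - s) / N := div_nonneg (sub_nonneg.2 hst) N.cast_nonneg
  have hend : s + N * ((t - s) / N) = t := by field_simp; ring
  refine ⟨fun k => s + k * ((t - s) / N), by simp, hend, fun k hk => ⟨?_, ?_⟩, fun k => ?_⟩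
  · exact le_add_of_nonneg_right (mul_nonneg k.cast_nonneg hh)
  · calc s + k * ((t - s) / N) ≤ s + N * ((t - s) / N) := by gcongr
      _ = t := hend
  · simp only [Nat.cast_succ, add_one_mul, ← add_assoc, sub_add_cancel_left, abs_neg,
      abs_of_nonneg hh]

lemma forall_mem_Icc_of_scale {T t₀ l : ℝ} (ht₀ : 0 < t₀) (hl : 0 < l) (hl1 : l < 1)
    {p : ℝ → Prop} (hsmall : ∀ t ∈ Icc 0 T, t ≤ t₀ → p t)
    (hscale : ∀ t ∈ Icc 0 T, t₀ < t → p (l * t) → p t) : ∀ t ∈ Icc 0 T, p t := by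
  have hpow : ∀ n : ℕ, ∀ t ∈ Icc 0 T, l ^ n * t ≤ t₀ → p t := by
    intro n
    induction n with
    | zero => simpa using hsmall
    | succ n ih =>
      intro t ht htn
      rcases le_or_gt t t₀ with htt | htt
      · exact hsmall t ht htt
      · refine hscale t ht htt (ih (l * t) ⟨mul_nonneg hl.le ht.1, ?_⟩ ?_)
        · exact (mul_le_of_le_one_left ht.1 hl1.le).trans ht.2
        · rwa [← mul_assoc, ← pow_succ]
  intro t ht
  have hlim : Tendsto (fun n : ℕ => l ^ n * t) atTop (nhds 0) := by
    simpa using (tendsto_pow_atTop_nhds_zero_of_lt_one hl.le hl1).mul_const t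
  obtain ⟨n, hn⟩ := (hlim.eventually (gt_mem_nhds ht₀)).exists
  exact hpow n t ht hn.le

variable {X Y : Type*} [MetricSpace X] [MetricSpace Y] {F : X → Y} {D : Set X} {γ : ℝ → X}
  {T : ℝ} {x y : X} {b c ε Λ C l : ℝ} {N : ℕ}

lemma CurveIn.dist_le_diam_image (hγ : CurveIn D γ T x y) (hF : ContinuousOn F D) {u v : ℝ}
    (hu : u ∈ Icc 0 T) (hv : v ∈ Icc 0 T) :
    dist (F (γ u)) (F (γ v)) ≤ diam (F ∘ γ '' Icc 0 T) :=
  dist_le_diam_of_mem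
    (isCompact_Icc.image_of_continuousOn (hF.comp hγ.lip.continuousOn hγ.mem)).isBounded
    (mem_image_of_mem _ hu) (mem_image_of_mem _ hv)

lemma CurveIn.diam_image_le_bdist (hγ : CurveIn D γ T x y) (hC : 0 ≤ C)
    (hF : RelativeOn Λ C F D) {u : ℝ} (hu : u ∈ Icc 0 T) (hT : T ≤ Λ * bdist D (γ u)) :
    diam (F ∘ γ '' Icc 0 T) ≤ 2 * (C * bdist (F '' D) (F (γ u))) := by
  refine diam_image_le_two_mul (mul_nonneg hC (bdist_nonneg _ _)) fun v hv =>
    hF _ (hγ.mem u hu) _ (hγ.mem v hv) (le_trans ?_ hT)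
  exact (hγ.dist_le hu hv).trans
    (abs_sub_le_iff.2 ⟨by linarith [hu.2, hv.1], by linarith [hu.1, hv.2]⟩)

/-- The image of a deep piece of `γ` need not be rectifiable; it is replaced by `N` short curves
joining the images of equidistant points. -/
lemma CurveIn.exists_deep_curve_image (hγ : CurveIn D γ T x y) (hY : QCSpace c Y) (hc : 0 < c)
    (hC : 0 < C) (hΛ : 0 < Λ) (hN : Λ ≤ N * ε) (hcont : ContinuousOn F D)
    (hlarge : RelativeOn Λ C F D) (hsmall : RelativeOn ε (2 * c)⁻¹ F D) {s : ℝ}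
    (hs : s ∈ Icc 0 T) (hdeep : ∀ u ∈ Icc s T, T ≤ Λ * bdist D (γ u)) :
    ∃ γ' L, CurveIn (F '' D) γ' L (F (γ s)) (F y) ∧ L ≤ N * (c * diam (F ∘ γ '' Icc 0 T)) ∧
      ∀ u ∈ Icc 0 L, diam (F ∘ γ '' Icc 0 T) ≤ 4 * C * bdist (F '' D) (γ' u) := by
  have hN0 : N ≠ 0 := by
    rintro rfl
    exact hΛ.not_ge (by simpa using hN)
  obtain ⟨τ, rfl, hτN, hτ, hτstep⟩ := exists_equipartition hs.2 hN0
  have hτT : ∀ k ≤ N, τ k ∈ Icc 0 T := fun k hk => Icc_subset_Icc_left hs.1 (hτ k hk)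
  have hstep : ∀ k < N, c * dist (F (γ (τ k))) (F (γ (τ (k + 1)))) ≤
      c * diam (F ∘ γ '' Icc 0 T) := fun k hk =>
    mul_le_mul_of_nonneg_left (hγ.dist_le_diam_image hcont (hτT k hk.le) (hτT _ hk)) hc.le
  have hshort : ∀ k < N, 2 * (c * dist (F (γ (τ k))) (F (γ (τ (k + 1))))) ≤
      bdist (F '' D) (F (γ (τ k))) := by
    intro k hk
    have hdist : dist (γ (τ k)) (γ (τ (k + 1))) ≤ ε * bdist D (γ (τ k)) := by
      refine (hγ.dist_le (hτT k hk.le) (hτT _ hk)).trans ?_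
      rw [hτstep, div_le_iff₀ (by positivity)]
      calc T - τ 0 ≤ Λ * bdist D (γ (τ k)) := by linarith [hs.1, hdeep _ (hτ k hk.le)]
        _ ≤ N * ε * bdist D (γ (τ k)) := by gcongr; exact bdist_nonneg _ _
        _ = ε * bdist D (γ (τ k)) * N := by ring
    have := hsmall _ (hγ.mem _ (hτT k hk.le)) _ (hγ.mem _ (hτT _ hk)) hdist
    rwa [le_inv_mul_iff₀ (by positivity), mul_assoc] at this
  have hdeep' : ∀ k ≤ N, diam (F ∘ γ '' Icc 0 T) / (2 * C) ≤ bdist (F '' D) (F (γ (τ k))) := by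
    intro k hk
    rw [div_le_iff₀' (by positivity), mul_assoc]
    exact hγ.diam_image_le_bdist hC.le hlarge (hτT k hk) (hdeep _ (hτ k hk))
  obtain ⟨γ', L, hγ', hL, hL'⟩ := hY.exists_curve_of_chain (q := fun k => F (γ (τ k)))
    (mem_image_of_mem F (hγ.mem _ hs)) N hstep hshort hdeep'
  rw [hτN, hγ.target] at hγ'
  refine ⟨γ', L, hγ', hL, fun u hu => ?_⟩
  have := hL' u hu
  rw [div_le_iff₀ (by positivity)] at this
  linarith

lemma CarrotIn.exists_extend_image {γ₁ : ℝ → Y} {L₁ s : ℝ} {z : Y}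
    (h₁ : CarrotIn (8 * N * c * C) (F '' D) γ₁ L₁ z (F (γ s)))
    (hL₁ : L₁ ≤ N * c * diam (F ∘ γ '' Icc 0 T)) (hγ : CurveIn D γ T x y) (hY : QCSpace c Y)
    (hc : 0 < c) (hC : 0 < C) (hΛ : 0 < Λ) (hN : Λ ≤ N * ε) (hcont : ContinuousOn F D)
    (hlarge : RelativeOn Λ C F D) (hsmall : RelativeOn ε (2 * c)⁻¹ F D) (hs : s ∈ Icc 0 T)
    (hdeep : ∀ u ∈ Icc s T, T ≤ Λ * bdist D (γ u)) :
    ∃ γ' L, CarrotIn (8 * N * c * C) (F '' D) γ' L z (F y) ∧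
      L ≤ 2 * N * c * diam (F ∘ γ '' Icc 0 T) := by
  obtain ⟨γ₂, L₂, h₂, hL₂, hdeep₂⟩ :=
    hγ.exists_deep_curve_image hY hc hC hΛ hN hcont hlarge hsmall hs hdeep
  have hL : L₁ + L₂ ≤ 2 * N * c * diam (F ∘ γ '' Icc 0 T) := by linarith
  refine ⟨_, _, h₁.concat h₂ fun u hu => hL.trans ?_, hL⟩
  calc 2 * N * c * diam (F ∘ γ '' Icc 0 T)
      ≤ 2 * N * c * (4 * C * bdist (F '' D) (γ₂ u)) := by gcongr; exact hdeep₂ u hu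
    _ = 8 * N * c * C * bdist (F '' D) (γ₂ u) := by ring

lemma CarrotIn.diam_image_le_half (h : CarrotIn b D γ T x y) (hb : 0 ≤ b)
    (hT : 2 * b * bdist D x ≤ T) (hl : 0 ≤ l) (hl1 : l ≤ 1) (hcont : ContinuousOn F D)
    (hF : WeakQSOn (2 * b * l) (1 / 4) F D) :
    2 * diam (F ∘ γ '' Icc 0 (l * T)) ≤ diam (F ∘ γ '' Icc 0 T) := by
  have hlT : l * T ≤ T := mul_le_of_le_one_left h.nonneg hl1
  have hxy : dist (F x) (F y) ≤ diam (F ∘ γ '' Icc 0 T) := by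
    simpa only [h.source, h.target] using h.toCurveIn.dist_le_diam_image hcont
      (left_mem_Icc.2 h.nonneg) (right_mem_Icc.2 h.nonneg)
  have hhead : diam (F ∘ γ '' Icc 0 (l * T)) ≤ 2 * (1 / 4 * dist (F x) (F y)) := by
    refine diam_image_le_two_mul (p := F x) (by positivity) fun u hu => ?_
    have huT : u ∈ Icc 0 T := ⟨hu.1, hu.2.trans hlT⟩
    refine hF x h.source_mem _ (h.mem u huT) y h.target_mem ?_
    calc dist x (γ u) ≤ l * T := (h.toCurveIn.dist_source_le huT).trans hu.2
      _ ≤ l * (2 * b * dist x y) := by gcongr; exact h.length_le_dist hb hT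
      _ = 2 * b * l * dist x y := by ring
  linarith

lemma CarrotIn.exists_carrot_image (h : CarrotIn b D γ T x y) (hY : QCSpace c Y) (hb : 0 < b)
    (hc : 0 < c) (hC : 0 < C) (hl : 0 < l) (hl1 : l < 1) (hx : 0 < bdist D x)
    (hN : 2 * b * (1 + b) / l ≤ N * ε) (hcont : ContinuousOn F D)
    (hlarge : RelativeOn (2 * b * (1 + b) / l) C F D) (hsmall : RelativeOn ε (2 * c)⁻¹ F D)
    (hhead : WeakQSOn (2 * b * l) (1 / 4) F D) :
    ∃ γ' L, CarrotIn (8 * N * c * C) (F '' D) γ' L (F x) (F y) ∧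
      L ≤ 2 * N * c * diam (F ∘ γ '' Icc 0 T) := by
  have hΛ : 0 < 2 * b * (1 + b) / l := by positivity
  have hbl : b / l ≤ 2 * b * (1 + b) / l := by gcongr; nlinarith
  have hb1 : 2 * b * (1 + b) ≤ 2 * b * (1 + b) / l := le_div_self (by positivity) hl hl1.le
  have key : ∀ t ∈ Icc 0 T, ∃ γ' L, CarrotIn (8 * N * c * C) (F '' D) γ' L (F x) (F (γ t)) ∧
      L ≤ 2 * N * c * diam (F ∘ γ '' Icc 0 t) := by
    refine forall_mem_Icc_of_scale (t₀ := 2 * b * bdist D x) (by positivity) hl hl1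
      (fun t ht htnear => ?_) fun t ht htfar ⟨γ₁, L₁, h₁, hL₁⟩ => ?_
    · have hrefl : CarrotIn (8 * N * c * C) (F '' D) (fun _ => F x) 0 (F x) (F (γ 0)) := by
        simpa only [h.source] using
          CarrotIn.refl (by positivity) (mem_image_of_mem F h.source_mem)
      refine hrefl.exists_extend_image (by positivity) (h.toCurveIn.truncate ht) hY hc hC hΛ hN
        hcont hlarge hsmall (left_mem_Icc.2 ht.1) fun u hu => ?_
      calc t ≤ 2 * b * ((1 + b) * bdist D (γ u)) := htnear.trans
            (mul_le_mul_of_nonneg_left (h.bdist_source_le ⟨hu.1, hu.2.trans ht.2⟩) (by positivity))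
        _ ≤ 2 * b * (1 + b) / l * bdist D (γ u) := by
            rw [← mul_assoc]
            exact mul_le_mul_of_nonneg_right hb1 (bdist_nonneg _ _)
    · have hlt : l * t ∈ Icc 0 t := ⟨mul_nonneg hl.le ht.1, mul_le_of_le_one_left ht.1 hl1.le⟩
      have hhalf := (h.truncate ht).diam_image_le_half hb.le htfar.le hl.le hl1.le hcont hhead
      refine h₁.exists_extend_image (hL₁.trans ?_) (h.toCurveIn.truncate ht) hY hc hC hΛ hN hcont
        hlarge hsmall hlt fun u hu => ?_
      · calc 2 * N * c * diam (F ∘ γ '' Icc 0 (l * t))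
            = N * c * (2 * diam (F ∘ γ '' Icc 0 (l * t))) := by ring
          _ ≤ N * c * diam (F ∘ γ '' Icc 0 t) := by gcongr
      · calc t = l * t / l := by field_simp
          _ ≤ b * bdist D (γ u) / l := by
            have := hu.1.trans (h.cone u ⟨hlt.1.trans hu.1, hu.2.trans ht.2⟩)
            gcongr
          _ = b / l * bdist D (γ u) := by ring
          _ ≤ 2 * b * (1 + b) / l * bdist D (γ u) :=
            mul_le_mul_of_nonneg_right hbl (bdist_nonneg _ _)
  exact h.target ▸ key T (right_mem_Icc.2 h.nonneg)

theorem IsUniform.image_of_relativeOn (h : IsUniform b D) (hD : IsOpen D)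
    (hfr : (frontier D).Nonempty) (hY : QCSpace c Y) (hb : 0 < b) (hc : 0 < c) (hC : 0 < C)
    (hl : 0 < l) (hl1 : l < 1) (hN : 2 * b * (1 + b) / l ≤ N * ε) (hcont : ContinuousOn F D)
    (hlarge : RelativeOn (2 * b * (1 + b) / l) C F D) (hsmall : RelativeOn ε (2 * c)⁻¹ F D)
    (hhead : WeakQSOn (2 * b * l) (1 / 4) F D) (hF : WeakQSOn b C F D) :
    IsUniform (8 * N * c * C) (F '' D) := by
  have exists_carrot : ∀ {x y z γ T}, CarrotIn b D γ T x z → y ∈ D → T ≤ b * dist x y →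
      ∃ γ' L, CarrotIn (8 * N * c * C) (F '' D) γ' L (F x) (F z) ∧
        L ≤ 4 * N * c * C * dist (F x) (F y) := by
    intro x y z γ T hγ hy hT
    obtain ⟨γ', L, hγ', hL⟩ := hγ.exists_carrot_image hY hb hc hC hl hl1
      (bdist_pos hD hfr hγ.source_mem) hN hcont hlarge hsmall hhead
    have hdiam : diam (F ∘ γ '' Icc 0 T) ≤ 2 * (C * dist (F x) (F y)) :=
      diam_image_le_two_mul (p := F x) (by positivity) fun u hu =>
        hF x hγ.source_mem _ (hγ.mem u hu) y hy ((hγ.toCurveIn.dist_source_le hu).trans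
          (hu.2.trans hT))
    refine ⟨γ', L, hγ', hL.trans ?_⟩
    calc 2 * N * c * diam (F ∘ γ '' Icc 0 T) ≤ 2 * N * c * (2 * (C * dist (F x) (F y))) := by
          gcongr
      _ = 4 * N * c * C * dist (F x) (F y) := by ring
  rw [isUniform_iff_exists_carrotIn] at h ⊢
  rintro _ ⟨x, hx, rfl⟩ _ ⟨y, hy, rfl⟩
  obtain ⟨z, γ₁, T₁, γ₂, T₂, h₁, h₂, hT⟩ := h x hx y hy
  obtain ⟨γ₁', L₁, h₁', hL₁⟩ := exists_carrot h₁ hy (by linarith [h₂.nonneg])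
  obtain ⟨γ₂', L₂, h₂', hL₂⟩ :=
    exists_carrot h₂ hx (by rw [dist_comm]; linarith [h₁.nonneg])
  rw [dist_comm] at hL₂
  exact ⟨F z, γ₁', L₁, γ₂', L₂, h₁', h₂', by linarith⟩

theorem IsUniform.image_of_quasisymmetricOn [CompleteSpace X] {M σ : ℝ → ℝ} (h : IsUniform b D)
    (hD : IsOpen D) (hfr : (frontier D).Nonempty) (hX : QCSpace c X) (hY : QCSpace c Y)
    (hb : 0 < b) (hc : 1 ≤ c) (hM : ∀ s, 0 < M s) (hl : 0 < l) (hl1 : l < 1)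
    (hσl : 2 * b * l ≤ σ (1 / 4)) (hε : 0 ≤ ε) (hσε : 2 * c * ε ≤ σ (2 * c)⁻¹)
    (hN : 2 * b * (1 + b) / l ≤ N * ε) (hcont : ContinuousOn F D) (hD' : IsOpen (F '' D))
    (hfr' : (frontier (F '' D)).Nonempty) (hF : QuasisymmetricOn M σ F D) :
    IsUniform (8 * N * c * M (2 * c * (2 * b * (1 + b) / l))) (F '' D) := by
  have hc0 : 0 < c := by linarith
  have hrel : ∀ {s Φ}, WeakQSOn (2 * c * s) Φ F D → 0 ≤ s → 0 < Φ → RelativeOn s Φ F D :=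
    fun h hs hΦ => h.relativeOn hc0 hs hΦ hX (fun s => ⟨M s, hF.weakQSOn s⟩) hcont hD' hfr'
  have hscale : b ≤ 2 * c * (2 * b * (1 + b) / l) := by
    rw [mul_div_assoc', le_div_iff₀ hl]
    nlinarith [mul_pos hb hc0, mul_pos hb hb]
  exact h.image_of_relativeOn hD hfr hY hb hc0 (hM _) hl hl1 hN hcont
    (hrel (hF.weakQSOn _) (by positivity) (hM _))
    (hrel ((hF.weakQSOn_small _ (by positivity)).mono_scale hσε) hε (by positivity))
    ((hF.weakQSOn_small _ (by norm_num)).mono_scale hσl) ((hF.weakQSOn _).mono_scale hscale)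

end UniformImage

universe u v

theorem exists_isUniform_image_of_quasisymmetricOn {b c : ℝ} {M σ : ℝ → ℝ} (hb : 1 ≤ b)
    (hc : 1 ≤ c) (hM : ∀ s, 0 < M s) (hσ : ∀ ε, 0 < ε → 0 < σ ε) :
    ∃ b', 1 ≤ b' ∧ ∀ {X : Type u} {Y : Type v} [MetricSpace X] [MetricSpace Y] [CompleteSpace X]
      {F : X → Y} {D : Set X}, QCSpace c X → QCSpace c Y → IsOpen D → (frontier D).Nonempty →
        ContinuousOn F D → IsOpen (F '' D) → (frontier (F '' D)).Nonempty →
          QuasisymmetricOn M σ F D → IsUniform b D → IsUniform b' (F '' D) := by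
  obtain ⟨l, hl, hlmin⟩ : ∃ l, 0 < l ∧ l < min 1 (σ (1 / 4) / (2 * b)) :=
    exists_between (lt_min one_pos (div_pos (hσ _ (by norm_num)) (by linarith)))
  obtain ⟨hl1, hσl⟩ := lt_min_iff.1 hlmin
  rw [lt_div_iff₀' (by linarith)] at hσl
  have hε : 0 < σ (2 * c)⁻¹ / (2 * c) := div_pos (hσ _ (by positivity)) (by positivity)
  obtain ⟨N, hN⟩ := Archimedean.arch (2 * b * (1 + b) / l) hε
  rw [nsmul_eq_mul] at hN
  refine ⟨max 1 (8 * N * c * M (2 * c * (2 * b * (1 + b) / l))), le_max_left _ _, ?_⟩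
  intro X Y _ _ _ F D hX hY hD hfr hcont hD' hfr' hF h
  exact (h.image_of_quasisymmetricOn hD hfr hX hY (by linarith) hc hM hl hl1 hσl.le hε.le
    (mul_div_cancel₀ _ (by positivity)).le hN hcont hD' hfr' hF).mono (le_max_right _ _)

section Homeomorph

variable {X Y : Type*} {G : Set X} {G' : Set Y} {F : X → Y}

lemma exists_forall_coe_eq [Nonempty Y] (f : G → G') : ∃ F : X → Y, ∀ x : G, F x = f x :=
  ⟨Function.extend Subtype.val (fun x => (f x : Y)) fun _ => Classical.arbitrary Y,
    fun x => Subtype.val_injective.extend_apply _ _ x⟩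

variable [MetricSpace X] [MetricSpace Y] {D : Set X} {f : G ≃ₜ G'}

lemma isOpen_imSet (hG' : IsOpen G') (hD : IsOpen D) : IsOpen (imSet f D) :=
  hG'.isOpenMap_subtype_val _ (f.isOpenMap _ (hD.preimage continuous_subtype_val))

lemma imSet_eq_image (hF : ∀ x : G, F x = f x) (hDG : D ⊆ G) : imSet f D = F '' D := by
  simp only [imSet, image_image, ← hF]
  rw [← image_image F, Subtype.image_preimage_coe, inter_eq_right.2 hDG]

lemma continuousOn_of_forall_coe_eq (hF : ∀ x : G, F x = f x) : ContinuousOn F G :=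
  continuousOn_iff_continuous_domRestrict.2
    ((continuous_subtype_val.comp f.continuous).congr fun x => (hF x).symm)

end Homeomorph

theorem stmt12_general (c c₁ H b : ℝ) (hc : 1 ≤ c) (hc₁ : 1 ≤ c₁) (hH : 1 ≤ H) (hb : 1 ≤ b) :
    ∃ b' : ℝ, 1 ≤ b' ∧
      ∀ (X : Type u) (Y : Type v) [MetricSpace X] [MetricSpace Y] [CompleteSpace X],
        QCSpace c X → QCSpace c Y →
        ∀ (G : Set X) (G' : Set Y), IsOpen G' → QCSet c₁ G' →
          ∀ f : G ≃ₜ G', WeakQS H f → WeakQS H f.symm →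
            ∀ D ⊆ G, IsOpen D → D ≠ univ → imSet f D ≠ univ → IsUniform b D →
              IsUniform b' (imSet f D) := by
  obtain ⟨b', hb', key⟩ := exists_isUniform_image_of_quasisymmetricOn.{u, v} hb hc
    (M := fun s => H * (2 * H) ^ ⌈b * s⌉₊) (σ := fun ε => (2 * (H * (2 * H) ^ ⌈c₁ * ε⁻¹⌉₊))⁻¹)
    (fun s => by positivity) (fun ε _ => by positivity)
  refine ⟨b', hb', ?_⟩
  intro X Y _ _ _ hX hY G G' hG' hG'c f hf hfsymm D hDG hD hDuniv hD'univ hDb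
  obtain rfl | ⟨p, hp⟩ := D.eq_empty_or_nonempty
  · simp [imSet, IsUniform]
  have : Nonempty X := ⟨p⟩
  have : Nonempty Y := ⟨f ⟨p, hDG hp⟩⟩
  obtain ⟨F, hF⟩ := exists_forall_coe_eq f
  obtain ⟨Fi, hFi⟩ := exists_forall_coe_eq f.symm
  have hD' := isOpen_imSet (f := f) hG' hD
  have hQS := quasisymmetricOn_of_weakQSOn (by linarith) (by linarith) hH hDb.qcSet hG'c
    (fun x hx => hF ⟨x, hDG hx⟩ ▸ (f ⟨x, hDG hx⟩).2)
    (fun x hx => by rw [hF ⟨x, hDG hx⟩, hFi, f.symm_apply_apply])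
    ((hf.weakQSOn hF).mono_set hDG) (hfsymm.weakQSOn hFi)
  rw [imSet_eq_image hF hDG] at hD' hD'univ ⊢
  exact key hX hY hD (hX.frontier_nonempty ⟨p, hp⟩ hDuniv)
    ((continuousOn_of_forall_coe_eq hF).mono hDG) hD'
    (hY.frontier_nonempty ⟨F p, mem_image_of_mem F hp⟩ hD'univ) hQS hDb

/-- Theorem 1: Suppose `X, Y` are `c`-quasiconvex complete metric
spaces, `G ⊊ X` a domain, `G' ⊊ Y` a `c₁`-quasiconvex domain, and both
`f : G → G'` and `f⁻¹` are weakly `H`-quasisymmetric. Then the image of every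
`b`-uniform subdomain `D ⊆ G` is `b'`-uniform, with `b'` depending only on
`c, c₁, H, b`. -/
theorem stmt12 (c c₁ H b : ℝ) (hc : 1 ≤ c) (hc₁ : 1 ≤ c₁) (hH : 1 ≤ H)
    (hb : 1 ≤ b) :
    ∃ b' : ℝ, 1 ≤ b' ∧
      ∀ (X Y : Type) [MetricSpace X] [MetricSpace Y]
        [CompleteSpace X] [CompleteSpace Y], QCSpace c X → QCSpace c Y →
        ∀ (G : Set X) (G' : Set Y), IsProperDomain G → IsProperDomain G' →
          QCSet c₁ G' →
          ∀ f : ↥G ≃ₜ ↥G', WeakQS H (⇑f) → WeakQS H (⇑f.symm) →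
            ∀ D : Set X, D ⊆ G → IsDomainSet D → IsUniform b D →
              IsUniform b' (imSet f D) := by
  obtain ⟨b', hb', h⟩ := stmt12_general c c₁ H b hc hc₁ hH hb
  exact ⟨b', hb', fun X Y _ _ _ _ hX hY G G' hG hG' hG'c f hf hfsymm D hDG hD =>
    h X Y hX hY G G' hG'.1 hG'c f hf hfsymm D hDG hD.1
      (fun hDuniv => hG.2.2 (univ_subset_iff.1 (hDuniv ▸ hDG)))
      (fun hD'univ => hG'.2.2 (univ_subset_iff.1 (hD'univ ▸ Subtype.coe_image_subset G' _)))⟩
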